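/- Let n ≥ 4, let L be a Cartan type Lie superalgebra over ℂ (one of W(n), S(n), S̃(n) for n even, or H(n) for n > 4) with its ℤ-grading, let f ∈ BDer(L) be a homogeneous super-biderivation, and let φ_f, ψ_f : L → L' be linear maps with f(x,y) = [φ_f(x), y] = [x, ψ_f(y)] for all x, y ∈ L. If φ_f vanishes on L_{−1} ⊕ L_0 ⊕ L_1 or ψ_f vanishes on L_{−1} ⊕ L_0 ⊕ L_1, then f is the zero map. -/

import Mathlib

open scoped BigOperators

noncomputable section

namespace CartanSuper

/-- Coordinates of the exterior algebra `Λ(n)` with respect to the monomial basis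
`{x_S : S ⊆ {1,…,n}}`. -/
abbrev Lambda (n : ℕ) := Finset (Fin n) → ℂ

/-- Endomorphism algebra of `Λ(n)`. -/
abbrev E (n : ℕ) := Module.End ℂ (Lambda n)

variable (n : ℕ)

/-- `(−1)^k`. -/
def msign (k : ℕ) : ℂ := (-1 : ℂ) ^ k

/-- The basis monomial `x_S = x_{i₁}⋯x_{i_k}` (indices in increasing order). -/
def mono (S : Finset (Fin n)) : Lambda n := fun T => if T = S then 1 else 0

/-- Number of inversions between `S` and `T`. -/
def inversions (S T : Finset (Fin n)) : ℕ := ((S ×ˢ T).filter fun p => p.2 < p.1).card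

/-- The multiplication of `Λ(n)` in coordinates:
`x_S · x_T = (−1)^{inversions} x_{S ∪ T}` for disjoint `S, T` and `0` otherwise. -/
def lmulFun (f g : Lambda n) : Lambda n :=
  fun U => ∑ S ∈ U.powerset, msign (inversions n S (U \ S)) * f S * g (U \ S)

/-- Left multiplication by an element of `Λ(n)`, as a linear map `Λ(n) →ₗ End Λ(n)`. -/
def mulOp : Lambda n →ₗ[ℂ] E n where
  toFun f :=
    { toFun := lmulFun n f
      map_add' := by
        intro g h; funext U
        simp [lmulFun, mul_add, Finset.sum_add_distrib]
      map_smul' := by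
        intro c g; funext U
        simp only [lmulFun, Pi.smul_apply, smul_eq_mul, RingHom.id_apply, Finset.mul_sum]
        exact Finset.sum_congr rfl (by intros; ring) }
  map_add' := by
    intro f g; apply LinearMap.ext; intro h; funext U
    show lmulFun n (f + g) h U = lmulFun n f h U + lmulFun n g h U
    simp only [lmulFun]
    rw [← Finset.sum_add_distrib]
    exact Finset.sum_congr rfl (by intros; simp [Pi.add_apply]; ring)
  map_smul' := by
    intro c f; apply LinearMap.ext; intro h; funext U
    show lmulFun n (c • f) h U = (c • lmulFun n f h) U
    simp only [lmulFun, Pi.smul_apply, smul_eq_mul, Finset.mul_sum]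
    exact Finset.sum_congr rfl (by intros; ring)

/-- The superderivation `∂_i` of `Λ(n)`, in coordinates. -/
def pd (i : Fin n) : E n where
  toFun f := fun S =>
    if i ∈ S then 0 else msign (S.filter (· < i)).card * f (insert i S)
  map_add' := by
    intro f g; funext S; by_cases h : i ∈ S <;> simp [h, mul_add]
  map_smul' := by
    intro c f; funext S; by_cases h : i ∈ S <;> simp [h] <;> ring

/-- The parity operator `σ` of `Λ(n)`: `σ(x_S) = (−1)^{|S|} x_S`. -/
def par : E n where
  toFun f := fun S => msign S.card * f S
  map_add' := by intro f g; funext S; simp [mul_add]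
  map_smul' := by intro c f; funext S; simp; ring

/-- The super-commutator `[D,F] = D∘F − (−1)^{|D||F|} F∘D`, extended bilinearly to all of
`End Λ(n)` using the parity operator `σ`
(for homogeneous `D`, `σ∘D∘σ = (−1)^{|D|} D`). -/
def sbFun (D F : E n) : E n :=
  D * F - (2:ℂ)⁻¹ • ((F + par n * F * par n) * D + (F - par n * F * par n) * (par n * D * par n))

/-- The super-commutator as a bilinear map. -/
def sbL : E n →ₗ[ℂ] E n →ₗ[ℂ] E n :=
  LinearMap.mk₂ ℂ (sbFun n)
    (fun D D' F => by
      simp only [sbFun, add_mul, sub_mul, mul_add, mul_sub, smul_mul_assoc, mul_smul_comm,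
        smul_add, smul_sub]
      module)
    (fun c D F => by
      simp only [sbFun, add_mul, sub_mul, mul_add, mul_sub, smul_mul_assoc, mul_smul_comm,
        smul_add, smul_sub]
      module)
    (fun D F F' => by
      simp only [sbFun, add_mul, sub_mul, mul_add, mul_sub, smul_mul_assoc, mul_smul_comm,
        smul_add, smul_sub]
      module)
    (fun c D F => by
      simp only [sbFun, add_mul, sub_mul, mul_add, mul_sub, smul_mul_assoc, mul_smul_comm,
        smul_add, smul_sub]
      module)

/-- Shorthand for the super-commutator. -/
def sb (D F : E n) : E n := sbL n D F

/-- The ℤ₂-homogeneous component of `Λ(n)` of parity `p`. -/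
def lpar (p : ZMod 2) : Submodule ℂ (Lambda n) where
  carrier := {f | ∀ S : Finset (Fin n), (S.card : ZMod 2) ≠ p → f S = 0}
  add_mem' := by intro f g hf hg S hS; simp [Pi.add_apply, hf S hS, hg S hS]
  zero_mem' := by intro S hS; rfl
  smul_mem' := by intro c f hf S hS; simp [Pi.smul_apply, hf S hS]

/-- The ℤ-homogeneous component of `Λ(n)` of degree `m` (zero unless `0 ≤ m ≤ n`). -/
def ldeg (m : ℤ) : Submodule ℂ (Lambda n) where
  carrier := {f | ∀ S : Finset (Fin n), (S.card : ℤ) ≠ m → f S = 0}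
  add_mem' := by intro f g hf hg S hS; simp [Pi.add_apply, hf S hS, hg S hS]
  zero_mem' := by intro S hS; rfl
  smul_mem' := by intro c f hf S hS; simp [Pi.smul_apply, hf S hS]

/-- Endomorphisms of `Λ(n)` that are ℤ₂-homogeneous of parity `p`. -/
def epar (p : ZMod 2) : Submodule ℂ (E n) where
  carrier := {D | ∀ (q : ZMod 2), ∀ f ∈ lpar n q, D f ∈ lpar n (q + p)}
  add_mem' := by
    intro D F hD hF q f hf
    simpa [LinearMap.add_apply] using (lpar n (q + p)).add_mem (hD q f hf) (hF q f hf)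
  zero_mem' := by intro q f hf; simpa using (lpar n (q + p)).zero_mem
  smul_mem' := by
    intro c D hD q f hf
    simpa [LinearMap.smul_apply] using (lpar n (q + p)).smul_mem c (hD q f hf)

/-- Endomorphisms of `Λ(n)` that are ℤ-homogeneous of degree `d`. -/
def edeg (d : ℤ) : Submodule ℂ (E n) where
  carrier := {D | ∀ (m : ℤ), ∀ f ∈ ldeg n m, D f ∈ ldeg n (m + d)}
  add_mem' := by
    intro D F hD hF m f hf
    simpa [LinearMap.add_apply] using (ldeg n (m + d)).add_mem (hD m f hf) (hF m f hf)
  zero_mem' := by intro m f hf; simpa using (ldeg n (m + d)).zero_mem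
  smul_mem' := by
    intro c D hD m f hf
    simpa [LinearMap.smul_apply] using (ldeg n (m + d)).smul_mem c (hD m f hf)

/-- The linear map `(f₁,…,f_n) ↦ ∑ᵢ fᵢ ∂ᵢ`. -/
def Wmap : (Fin n → Lambda n) →ₗ[ℂ] E n where
  toFun F := ∑ i, mulOp n (F i) * pd n i
  map_add' := by
    intro F G
    simp only [Pi.add_apply, map_add, add_mul, Finset.sum_add_distrib]
  map_smul' := by
    intro c F
    simp only [RingHom.id_apply, Pi.smul_apply, map_smul, smul_mul_assoc, Finset.smul_sum]

/-- The divergence `(f₁,…,f_n) ↦ ∑ᵢ ∂ᵢ(fᵢ)`. -/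
def divMap : (Fin n → Lambda n) →ₗ[ℂ] Lambda n where
  toFun F := ∑ i, pd n i (F i)
  map_add' := by
    intro F G
    simp only [Pi.add_apply, map_add, Finset.sum_add_distrib]
  map_smul' := by
    intro c F
    simp only [RingHom.id_apply, Pi.smul_apply, map_smul, Finset.smul_sum]

/-- The Witt type Lie superalgebra `W(n) = {∑ fᵢ∂ᵢ : fᵢ ∈ Λ(n)}`. -/
def Wn : Submodule ℂ (E n) := LinearMap.range (Wmap n)

/-- Divergence-free coefficient tuples. -/
def divFree : Submodule ℂ (Fin n → Lambda n) := LinearMap.ker (divMap n)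

/-- The special type Lie superalgebra `S(n) = {∑ fᵢ∂ᵢ : ∑ ∂ᵢ(fᵢ) = 0}`. -/
def Sn : Submodule ℂ (E n) := (divFree n).map (Wmap n)

/-- The top monomial `ω = x₁x₂⋯x_n`. -/
def omegaTop : Lambda n := mono n Finset.univ

/-- `1 − x₁x₂⋯x_n`. -/
def oneM : Lambda n := mono n ∅ - omegaTop n

/-- Multiplication of every coefficient by `1 − x₁⋯x_n`. -/
def oneMScale : (Fin n → Lambda n) →ₗ[ℂ] (Fin n → Lambda n) :=
  LinearMap.pi fun i => (mulOp n (oneM n)) ∘ₗ LinearMap.proj i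

/-- The Lie superalgebra `S̃(n) = {(1−x₁⋯x_n)∑ fᵢ∂ᵢ : ∑ ∂ᵢ(fᵢ) = 0}` (`n` even). -/
def Stn : Submodule ℂ (E n) := (divFree n).map (Wmap n ∘ₗ oneMScale n)

/-- The conjugate index `i'`. -/
def cidx (i : Fin n) : Fin n :=
  ⟨if i.val < n / 2 then i.val + n / 2 else if i.val < 2 * (n / 2) then i.val - n / 2 else i.val,
   by have := i.isLt; split_ifs <;> omega⟩

/-- The linear map `f ↦ D_H(f) = (−1)^{|f|} ∑ᵢ ∂ᵢ(f)∂_{i'}` (the sign is implemented by the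
parity operator `σ`, so that this is a single linear map agreeing with `D_H` on homogeneous
elements). -/
def DHmap : Lambda n →ₗ[ℂ] E n where
  toFun f := ∑ i, mulOp n (pd n i (par n f)) * pd n (cidx n i)
  map_add' := by
    intro f g
    simp only [map_add, add_mul, Finset.sum_add_distrib]
  map_smul' := by
    intro c f
    simp only [RingHom.id_apply, map_smul, smul_mul_assoc, Finset.smul_sum]

/-- Evaluation of the top coefficient. -/
def evalTop : Lambda n →ₗ[ℂ] ℂ := LinearMap.proj Finset.univ

/-- The Hamiltonian Lie superalgebra `H(n) = {D_H(f) : f ∈ ⊕_{i=0}^{n−1} Λ(n)_i}`. -/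
def Hn : Submodule ℂ (E n) := (LinearMap.ker (evalTop n)).map (DHmap n)

/-- `H̃(n) = {D_H(f) : f ∈ Λ(n)}`. -/
def HtN : Submodule ℂ (E n) := LinearMap.range (DHmap n)

/-- The degree derivation `𝒞 = ∑ᵢ xᵢ∂ᵢ`. -/
def CC : E n := ∑ i, mulOp n (mono n {i}) * pd n i

/-- The span of the diagonal elements `xᵢ∂ᵢ`. -/
def diagSpan : Submodule ℂ (E n) :=
  Submodule.span ℂ (Set.range fun i : Fin n => mulOp n (mono n {i}) * pd n i)

/-- The four families of Cartan type Lie superalgebras. -/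
inductive CT | W | S | St | H
deriving DecidableEq

/-- Validity of the parameter `n` for each family. -/
def CT.valid : CT → ℕ → Prop
  | .W, n => 4 ≤ n
  | .S, n => 4 ≤ n
  | .St, n => 4 ≤ n ∧ Even n
  | .H, n => 4 < n

/-- The Cartan type Lie superalgebra `L` itself. -/
def CT.algebra : CT → (n : ℕ) → Submodule ℂ (E n)
  | .W, n => Wn n
  | .S, n => Sn n
  | .St, n => Stn n
  | .H, n => Hn n

/-- The extended algebra `L'`: `L' = L` for `W(n)` and `S̃(n)`, `L' = S(n) ⊕ ℂ𝒞` for `S(n)`,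
and `L' = H̃(n) ⊕ ℂ𝒞` for `H(n)`. -/
def CT.prime : CT → (n : ℕ) → Submodule ℂ (E n)
  | .W, n => Wn n
  | .S, n => Sn n ⊔ Submodule.span ℂ {CC n}
  | .St, n => Stn n
  | .H, n => HtN n ⊔ Submodule.span ℂ {CC n}

/-- The top degree `ξ_L` of the ℤ-grading. -/
def CT.xi : CT → (n : ℕ) → ℤ
  | .W, n => (n : ℤ) - 1
  | .S, n => (n : ℤ) - 2
  | .St, n => (n : ℤ) - 2
  | .H, n => (n : ℤ) - 3

/-- The ℤ-grading component `L_j = L ∩ W(n)_j`; for `S̃(n)` the component of degree `−1`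
is `span{(1−x₁⋯x_n)∂ᵢ}` instead. -/
def CT.grade (t : CT) (n : ℕ) (j : ℤ) : Submodule ℂ (E n) :=
  match t with
  | .St =>
      if j = -1 then
        Submodule.span ℂ (Set.range fun i : Fin n => mulOp n (oneM n) * pd n i)
      else Stn n ⊓ edeg n j
  | t => t.algebra n ⊓ edeg n j

/-- The ℤ-grading component `L'_j` of the extended algebra `L'`. -/
def CT.grade' (t : CT) (n : ℕ) (j : ℤ) : Submodule ℂ (E n) :=
  match t with
  | .St => CT.grade .St n j
  | t => t.prime n ⊓ edeg n j

/-- The standard Cartan subalgebra `H_L` of `L`: the part of the diagonal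
`span{xᵢ∂ᵢ}` lying in `L`. -/
def CT.cartan (t : CT) (n : ℕ) : Submodule ℂ (E n) := t.algebra n ⊓ diagSpan n

/-- The weight space of `M ⊆ End Λ(n)` of weight `μ ∈ H_L^*` under the adjoint action
of the standard Cartan subalgebra of `L`. -/
def wtsp (t : CT) (n : ℕ) (M : Submodule ℂ (E n)) (μ : Module.Dual ℂ (t.cartan n)) :
    Submodule ℂ (E n) where
  carrier := {x | x ∈ M ∧ ∀ h : t.cartan n, sbL n h x = μ h • x}
  add_mem' := by
    rintro x y ⟨hx, hx'⟩ ⟨hy, hy'⟩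
    exact ⟨M.add_mem hx hy, fun h => by simp [map_add, hx' h, hy' h, smul_add]⟩
  zero_mem' := ⟨M.zero_mem, fun h => by simp⟩
  smul_mem' := by
    rintro c x ⟨hx, hx'⟩
    exact ⟨M.smul_mem c hx, fun h => by simp [map_smul, hx' h, smul_comm c]⟩

/-- The set of roots of `M` with respect to the standard Cartan subalgebra of `L`:
the nonzero weights with nonzero weight space. -/
def CT.roots (t : CT) (n : ℕ) (M : Submodule ℂ (E n)) : Set (Module.Dual ℂ (t.cartan n)) :=
  {ε | ε ≠ 0 ∧ wtsp t n M ε ≠ ⊥}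

/-- The sign `(−1)^p` for `p ∈ ℤ₂`. -/
def sgn (p : ZMod 2) : ℂ := (-1 : ℂ) ^ p.val

/-- `f` is a super-biderivation of `L` of ℤ₂-degree `pf`:
a bilinear map with `f(L_α, L_β) ⊆ L_{α+β+pf}` satisfying
`f([x,y],z) = (−1)^{|x||f|}[x,f(y,z)] + (−1)^{|y||z|}[f(x,z),y]` and
`f(x,[y,z]) = [f(x,y),z] + (−1)^{(|f|+|x|)|y|}[y,f(x,z)]` for homogeneous `x,y,z ∈ L`.
(The bilinear map is given as a bilinear map on the ambient space `End Λ(n)`;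
only its restriction to `L` is relevant.) -/
structure IsSuperBider (L : Submodule ℂ (E n)) (pf : ZMod 2)
    (f : E n →ₗ[ℂ] E n →ₗ[ℂ] E n) : Prop where
  maps : ∀ (α β : ZMod 2), ∀ x ∈ L ⊓ epar n α, ∀ y ∈ L ⊓ epar n β,
    f x y ∈ L ⊓ epar n (α + β + pf)
  eq1 : ∀ (α β γ : ZMod 2), ∀ x ∈ L ⊓ epar n α, ∀ y ∈ L ⊓ epar n β, ∀ z ∈ L ⊓ epar n γ,
    f (sbL n x y) z = sgn (α * pf) • sbL n x (f y z) + sgn (β * γ) • sbL n (f x z) y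
  eq2 : ∀ (α β γ : ZMod 2), ∀ x ∈ L ⊓ epar n α, ∀ y ∈ L ⊓ epar n β, ∀ z ∈ L ⊓ epar n γ,
    f x (sbL n y z) = sbL n (f x y) z + sgn ((pf + α) * β) • sbL n y (f x z)

/-- `D` is a superderivation of `L` of ℤ₂-degree `p`:
`D(L_α) ⊆ L_{α+p}` and `D([x,y]) = [D(x),y] + (−1)^{|D||x|}[x,D(y)]` for homogeneous
`x, y ∈ L`. (Given as a linear map on the ambient space `End Λ(n)`.) -/
structure IsSuperDer (L : Submodule ℂ (E n)) (p : ZMod 2)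
    (D : E n →ₗ[ℂ] E n) : Prop where
  maps : ∀ (α : ZMod 2), ∀ x ∈ L ⊓ epar n α, D x ∈ L ⊓ epar n (α + p)
  leib : ∀ (α β : ZMod 2), ∀ x ∈ L ⊓ epar n α, ∀ y ∈ L ⊓ epar n β,
    D (sbL n x y) = sbL n (D x) y + sgn (p * α) • sbL n x (D y)

/-- `f ∈ BDer(L)_ε`: the super-biderivation `f` has weight `ε ∈ H_L^*`, i.e.
`f(L_η, L_ζ) ⊆ L_{ε+η+ζ}` for all weights `η, ζ`. -/
def CT.HasWeight (t : CT) (n : ℕ) (f : E n →ₗ[ℂ] E n →ₗ[ℂ] E n)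
    (ε : Module.Dual ℂ (t.cartan n)) : Prop :=
  ∀ (η ζ : Module.Dual ℂ (t.cartan n)),
    ∀ x ∈ wtsp t n (t.algebra n) η, ∀ y ∈ wtsp t n (t.algebra n) ζ,
      f x y ∈ wtsp t n (t.algebra n) (ε + η + ζ)

/-- `f ∈ BDer(L)_i`: the super-biderivation `f` has ℤ-degree `i`, i.e.
`f(L_j, L_k) ⊆ L_{i+j+k}` for all `j, k ∈ ℤ`. -/
def CT.HasDeg (t : CT) (n : ℕ) (f : E n →ₗ[ℂ] E n →ₗ[ℂ] E n) (i : ℤ) : Prop :=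
  ∀ (j k : ℤ), ∀ x ∈ t.grade n j, ∀ y ∈ t.grade n k, f x y ∈ t.grade n (i + j + k)

theorem Emul_neg (a b : E n) : a * -b = -(a * b) := by
  apply LinearMap.ext; intro v
  simp [Module.End.mul_apply]

theorem Eneg_mul (a b : E n) : -a * b = -(a * b) := by
  apply LinearMap.ext; intro v
  simp [Module.End.mul_apply]

theorem par_par : par n * par n = 1 := by
  apply LinearMap.ext; intro f; funext S
  show msign S.card * (msign S.card * f S) = f S
  rw [← mul_assoc]; simp [msign, ← mul_pow]

theorem par_pd (i : Fin n) : par n * pd n i = -(pd n i * par n) := by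
  apply LinearMap.ext; intro f; funext S
  show msign S.card * (if i ∈ S then 0 else msign (S.filter (· < i)).card * f (insert i S))
    = -(if i ∈ S then 0 else msign (S.filter (· < i)).card *
      (msign (insert i S).card * f (insert i S)))
  by_cases h : i ∈ S
  · simp [h]
  · simp only [h, if_false, Finset.card_insert_of_notMem h, msign, pow_succ]; ring

theorem par_mulOp (f : Lambda n) : par n * mulOp n f = mulOp n (par n f) * par n := by
  apply LinearMap.ext; intro g; funext U
  show msign U.card * (∑ S ∈ U.powerset, msign (inversions n S (U \ S)) * f S * g (U \ S))
    = ∑ S ∈ U.powerset, msign (inversions n S (U \ S)) * (msign S.card * f S) *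
      (msign (U \ S).card * g (U \ S))
  rw [Finset.mul_sum]
  refine Finset.sum_congr rfl fun S hS => ?_
  have h : U.card = S.card + (U \ S).card := by
    have := Finset.card_sdiff_add_card_eq_card (Finset.mem_powerset.1 hS); omega
  rw [h]; simp only [msign, pow_add]; ring

theorem par_mono (S : Finset (Fin n)) : par n (mono n S) = msign S.card • mono n S := by
  funext T
  show msign T.card * (if T = S then 1 else 0) = msign S.card * (if T = S then 1 else 0)
  by_cases h : T = S <;> simp [h]

theorem mulOp_one_right (f : Lambda n) : mulOp n f (mono n ∅) = f := by
  funext U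
  show (∑ S ∈ U.powerset, msign (inversions n S (U \ S)) * f S * mono n ∅ (U \ S)) = f U
  rw [Finset.sum_eq_single U]
  · simp [mono, inversions, msign]
  · intro S hS hne
    have : U \ S ≠ ∅ := by
      intro h
      exact hne (Finset.Subset.antisymm (Finset.mem_powerset.1 hS) (Finset.sdiff_eq_empty_iff_subset.1 h))
    simp [mono, this]
  · simp

theorem mulOp_one : mulOp n (mono n ∅) = 1 := by
  apply LinearMap.ext; intro g; funext U
  show (∑ S ∈ U.powerset, msign (inversions n S (U \ S)) * mono n ∅ S * g (U \ S)) = g U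
  rw [Finset.sum_eq_single ∅]
  · simp [mono, inversions, msign]
  · intro S hS hne
    simp [mono, hne]
  · simp

theorem mulOp_omega (g : Lambda n) (U : Finset (Fin n)) :
    mulOp n (omegaTop n) g U = if U = Finset.univ then g ∅ else 0 := by
  show (∑ S ∈ U.powerset, msign (inversions n S (U \ S)) * mono n Finset.univ S * g (U \ S)) = _
  split_ifs with h
  · subst h
    rw [Finset.sum_eq_single Finset.univ]
    · simp [mono, inversions, msign]
    · intro S hS hne
      simp [mono, hne]
    · simp
  · refine Finset.sum_eq_zero fun S hS => ?_
    have : S ≠ Finset.univ := by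
      rintro rfl
      exact h (Finset.univ_subset_iff.1 (Finset.mem_powerset.1 hS))
    simp [mono, this]

theorem pd_one (i : Fin n) : pd n i (mono n ∅) = 0 := by
  funext S
  show (if i ∈ S then 0 else msign (S.filter (· < i)).card * mono n ∅ (insert i S)) = 0
  simp [mono]

theorem pd_gen (i j : Fin n) : pd n i (mono n {j}) = if i = j then mono n ∅ else 0 := by
  funext S
  show (if i ∈ S then 0 else msign (S.filter (· < i)).card * mono n {j} (insert i S)) = _
  by_cases hij : i = j
  · subst hij
    by_cases hS : S = ∅
    · subst hS; simp [mono, msign]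
    · by_cases hi : i ∈ S
      · simp [hi, mono, hS]
      · have : insert i S ≠ {i} := by
          intro h
          apply hS
          rw [Finset.eq_empty_iff_forall_notMem]
          intro x hx
          have : x ∈ insert i S := Finset.mem_insert_of_mem hx
          rw [h, Finset.mem_singleton] at this
          exact hi (this ▸ hx)
        simp [hi, mono, hS, this]
  · have : insert i S ≠ {j} := by
      intro h
      have : i ∈ insert i S := Finset.mem_insert_self _ _
      rw [h, Finset.mem_singleton] at this
      exact hij this
    simp [mono, hij, this]

theorem pd_pair (i j : Fin n) (hij : i ≠ j) :
    pd n i (mono n {i, j}) = msign (({j} : Finset (Fin n)).filter (· < i)).card • mono n {j} := by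
  funext S
  show (if i ∈ S then 0 else msign (S.filter (· < i)).card * mono n {i, j} (insert i S))
    = msign (({j} : Finset (Fin n)).filter (· < i)).card * mono n {j} S
  by_cases hS : S = {j}
  · subst hS
    simp [hij, mono]
  · by_cases hi : i ∈ S
    · simp [hi, mono, hS]
    · have : insert i S ≠ {i, j} := by
        intro h
        apply hS
        have h2 := congrArg (fun T => Finset.erase T i) h
        simp only [Finset.erase_insert hi] at h2
        rw [h2, Finset.erase_insert (by simpa using hij)]
      simp [hi, mono, hS, this]

/-- action of `Wmap` on generators -/
theorem Wmap_gen (F : Fin n → Lambda n) (i : Fin n) : Wmap n F (mono n {i}) = F i := by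
  show (∑ k, mulOp n (F k) * pd n k) (mono n {i}) = F i
  rw [LinearMap.sum_apply, Finset.sum_eq_single i]
  · simp [Module.End.mul_apply, pd_gen, mulOp_one_right]
  · intro k _ hk
    simp [Module.End.mul_apply, pd_gen, hk]
  · simp

theorem Wmap_one (F : Fin n → Lambda n) : Wmap n F (mono n ∅) = 0 := by
  show (∑ k, mulOp n (F k) * pd n k) (mono n ∅) = 0
  rw [LinearMap.sum_apply]
  exact Finset.sum_eq_zero fun k _ => by simp [Module.End.mul_apply, pd_one]

theorem Wmap_omega (hn : 2 ≤ n) (F : Fin n → Lambda n) : Wmap n F (omegaTop n) ∅ = 0 := by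
  show (∑ k, mulOp n (F k) * pd n k) (omegaTop n) ∅ = 0
  rw [LinearMap.sum_apply, Finset.sum_apply]
  refine Finset.sum_eq_zero fun k _ => ?_
  show (∑ S ∈ (∅ : Finset (Fin n)).powerset, msign (inversions n S (∅ \ S)) * F k S *
    (if k ∈ ∅ \ S then 0 else msign ((∅ \ S).filter (· < k)).card *
      mono n Finset.univ (insert k (∅ \ S)))) = 0
  have : ({k} : Finset (Fin n)) ≠ Finset.univ := by
    intro h
    have := congrArg Finset.card h
    simp at this; omega
  simp [mono, this]

theorem sb_even (x D : E n) (hx : par n * x * par n = x) : sbL n x D = x * D - D * x := by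
  show x * D - (2:ℂ)⁻¹ • ((D + par n * D * par n) * x + (D - par n * D * par n) * (par n * x * par n)) = _
  rw [hx, ← add_mul]
  have : D + par n * D * par n + (D - par n * D * par n) = (2:ℂ) • D := by module
  rw [this, smul_mul_assoc, smul_smul]; norm_num

theorem sb_odd (x D : E n) (hx : par n * x * par n = -x) :
    sbL n x D = x * D - par n * D * par n * x := by
  show x * D - (2:ℂ)⁻¹ • ((D + par n * D * par n) * x + (D - par n * D * par n) * (par n * x * par n)) = _
  rw [hx, Emul_neg, ← sub_eq_add_neg, ← sub_mul]
  have : D + par n * D * par n - (D - par n * D * par n) = (2:ℂ) • (par n * D * par n) := by module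
  rw [this, smul_mul_assoc, smul_smul]; norm_num

theorem flip_even (x D : E n) (hx : par n * x * par n = x) (h : sbL n D x = 0) :
    sbL n x D = 0 := by
  have h' : D * x - (2:ℂ)⁻¹ • ((x + par n * x * par n) * D +
    (x - par n * x * par n) * (par n * D * par n)) = 0 := h
  rw [hx, sub_self, zero_mul, add_zero, ← two_smul ℂ x, smul_mul_assoc, smul_smul] at h'
  norm_num at h'
  rw [sb_even n x D hx, ← neg_sub, h', neg_zero]

theorem flip_odd (x D : E n) (hx : par n * x * par n = -x) (h : sbL n D x = 0) :
    sbL n x D = 0 := by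
  have h' : D * x - (2:ℂ)⁻¹ • ((x + par n * x * par n) * D +
    (x - par n * x * par n) * (par n * D * par n)) = 0 := h
  rw [hx, add_neg_cancel, zero_mul, zero_add, sub_neg_eq_add, ← two_smul ℂ x,
    smul_mul_assoc, smul_smul] at h'
  norm_num at h'
  have h2 : D * x = x * (par n * D * par n) := sub_eq_zero.1 h'
  have h3 : par n * (D * x) * par n = par n * (x * (par n * D * par n)) * par n := by rw [h2]
  have e1 : par n * (D * x) * par n = -(par n * D * par n * x) := by
    calc par n * (D * x) * par n = par n * D * (par n * par n) * x * par n := by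
          rw [par_par]; noncomm_ring
      _ = par n * D * par n * (par n * x * par n) := by noncomm_ring
      _ = _ := by rw [hx, Emul_neg]
  have e2 : par n * (x * (par n * D * par n)) * par n = -(x * D) := by
    calc par n * (x * (par n * D * par n)) * par n
        = (par n * x * par n) * D * (par n * par n) := by noncomm_ring
      _ = _ := by rw [hx, par_par, mul_one, Eneg_mul]
  rw [e1, e2, neg_inj] at h3
  rw [sb_odd n x D hx, h3, sub_self]

theorem pd_par_odd (i : Fin n) : par n * pd n i * par n = - pd n i := by
  rw [par_pd, Eneg_mul, mul_assoc, par_par, mul_one]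

theorem mul_pd_par (f : Lambda n) (i : Fin n) :
    par n * (mulOp n f * pd n i) * par n = - (mulOp n (par n f) * pd n i) := by
  rw [← mul_assoc, par_mulOp, mul_assoc, mul_assoc, ← mul_assoc (par n), pd_par_odd, Emul_neg]

theorem pd_edeg (i : Fin n) : pd n i ∈ edeg n (-1) := by
  intro m f hf S hS
  show (if i ∈ S then 0 else msign (S.filter (· < i)).card * f (insert i S)) = 0
  by_cases h : i ∈ S
  · simp [h]
  · have : f (insert i S) = 0 := by
      apply hf
      rw [Finset.card_insert_of_notMem h]
      push_cast
      intro h2; apply hS; omega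
    simp [this]

theorem mulOp_edeg (d : ℤ) (f : Lambda n) (hf : f ∈ ldeg n d) : mulOp n f ∈ edeg n d := by
  intro m g hg U hU
  show (∑ S ∈ U.powerset, msign (inversions n S (U \ S)) * f S * g (U \ S)) = 0
  refine Finset.sum_eq_zero fun S hS => ?_
  have h : U.card = S.card + (U \ S).card := by
    have := Finset.card_sdiff_add_card_eq_card (Finset.mem_powerset.1 hS); omega
  by_cases h1 : (S.card : ℤ) = d
  · have : g (U \ S) = 0 := by
      apply hg
      intro h2; apply hU; rw [h]; push_cast; omega
    simp [this]
  · simp [hf S h1]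

theorem mul_edeg (a b : ℤ) (D F : E n) (hD : D ∈ edeg n a) (hF : F ∈ edeg n b) :
    D * F ∈ edeg n (a + b) := by
  intro m f hf
  have := hD _ _ (hF m f hf)
  rwa [add_assoc, add_comm b a] at this

theorem mono_ldeg (S : Finset (Fin n)) : mono n S ∈ ldeg n S.card := by
  intro T hT
  have : T ≠ S := by rintro rfl; exact hT rfl
  simp [mono, this]

theorem cidx_cidx (i : Fin n) : cidx n (cidx n i) = i := by
  apply Fin.ext
  simp only [cidx]
  have := i.isLt
  split_ifs <;> omega

theorem DH_eq (g : Lambda n) : DHmap n g = Wmap n (fun k => pd n (cidx n k) (par n g)) := by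
  show (∑ i, mulOp n (pd n i (par n g)) * pd n (cidx n i))
    = ∑ k, mulOp n (pd n (cidx n k) (par n g)) * pd n k
  let e : Fin n ≃ Fin n := ⟨cidx n, cidx n, cidx_cidx n, cidx_cidx n⟩
  rw [← Equiv.sum_comp e]
  refine Finset.sum_congr rfl fun k _ => ?_
  show mulOp n (pd n (cidx n k) (par n g)) * pd n (cidx n (cidx n k)) = _
  rw [cidx_cidx]

theorem DH_mem_W (g : Lambda n) : DHmap n g ∈ Wn n := ⟨_, (DH_eq n g).symm⟩

theorem CC_mem_W : CC n ∈ Wn n := ⟨fun i => mono n {i}, rfl⟩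

theorem prime_le (t : CT) : t.prime n ≤ Wn n := by
  have hC : Submodule.span ℂ {CC n} ≤ Wn n := by
    rw [Submodule.span_singleton_le_iff_mem]; exact CC_mem_W n
  cases t with
  | W => exact le_rfl
  | S =>
    refine sup_le ?_ hC
    rintro _ ⟨F, _, rfl⟩
    exact ⟨F, rfl⟩
  | St =>
    rintro _ ⟨F, _, rfl⟩
    exact ⟨_, rfl⟩
  | H =>
    refine sup_le ?_ hC
    rintro _ ⟨g, rfl⟩
    exact DH_mem_W n g

theorem Wmap_single (i : Fin n) (g : Lambda n) :
    Wmap n (Pi.single i g) = mulOp n g * pd n i := by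
  show (∑ k, mulOp n ((Pi.single i g : Fin n → Lambda n) k) * pd n k) = _
  rw [Finset.sum_eq_single i]
  · simp
  · intro k _ hk; simp [hk]
  · simp

theorem div_single (i : Fin n) (g : Lambda n) (h : pd n i g = 0) :
    (Pi.single i g : Fin n → Lambda n) ∈ divFree n := by
  show (∑ k, pd n k ((Pi.single i g : Fin n → Lambda n) k)) = 0
  refine Finset.sum_eq_zero fun k _ => ?_
  by_cases hk : k = i
  · subst hk; simpa using h
  · simp [hk]

theorem scale_single (i : Fin n) (g : Lambda n) :
    oneMScale n (Pi.single i g) = Pi.single i (mulOp n (oneM n) g) := by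
  funext k
  show mulOp n (oneM n) ((Pi.single i g : Fin n → Lambda n) k) = _
  by_cases hk : k = i
  · subst hk; simp
  · simp [hk]

theorem oneM_gen (i : Fin n) : mulOp n (oneM n) (mono n {i}) = mono n {i} := by
  funext U
  have : mulOp n (oneM n) (mono n {i}) = mono n {i} - mulOp n (omegaTop n) (mono n {i}) := by
    rw [oneM, map_sub, mulOp_one]; rfl
  rw [this, Pi.sub_apply, mulOp_omega]
  have h : (∅ : Finset (Fin n)) ≠ {i} := (Finset.singleton_ne_empty i).symm
  simp [mono, h]

/-- `x_i ∂_j` for `i ≠ j` lies in `L_0` for types W, S, St. -/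
theorem xd_edeg (i j : Fin n) : mulOp n (mono n {i}) * pd n j ∈ edeg n 0 := by
  have := mul_edeg n 1 (-1) _ _ (mulOp_edeg n 1 (mono n {i}) (by simpa using mono_ldeg n {i}))
    (pd_edeg n j)
  simpa using this

theorem xd_mem (t : CT) (ht : t ≠ .H) (i j : Fin n) (hij : i ≠ j) :
    mulOp n (mono n {i}) * pd n j ∈ t.algebra n := by
  have h0 : pd n j (mono n {i}) = 0 := by simp [pd_gen, hij.symm]
  cases t with
  | W => exact ⟨_, Wmap_single n j _⟩
  | S => exact ⟨_, div_single n j _ h0, Wmap_single n j _⟩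
  | St =>
    refine ⟨_, div_single n j _ h0, ?_⟩
    rw [LinearMap.comp_apply, scale_single, oneM_gen, Wmap_single]
  | H => exact absurd rfl ht

theorem xd_grade (t : CT) (ht : t ≠ .H) (i j : Fin n) (hij : i ≠ j) :
    mulOp n (mono n {i}) * pd n j ∈ t.grade n 0 := by
  have h := xd_mem n t ht i j hij
  cases t with
  | W => exact ⟨h, xd_edeg n i j⟩
  | S => exact ⟨h, xd_edeg n i j⟩
  | St =>
    show _ ∈ (if (0:ℤ) = -1 then
      Submodule.span ℂ (Set.range fun i : Fin n => mulOp n (oneM n) * pd n i)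
      else Stn n ⊓ edeg n 0)
    rw [if_neg (by norm_num)]
    exact ⟨h, xd_edeg n i j⟩
  | H => exact absurd rfl ht

theorem pd_grade (t : CT) (ht : t ≠ .St) (hn : 2 ≤ n) (j : Fin n) :
    pd n j ∈ t.grade n (-1) := by
  cases t with
  | W => exact ⟨⟨_, (Wmap_single n j (mono n ∅)).trans (by rw [mulOp_one, one_mul])⟩, pd_edeg n j⟩
  | S => exact ⟨⟨_, div_single n j _ (pd_one n j), (Wmap_single n j (mono n ∅)).trans
      (by rw [mulOp_one, one_mul])⟩, pd_edeg n j⟩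
  | St => exact absurd rfl ht
  | H =>
    refine ⟨⟨-mono n {cidx n j}, ?_, ?_⟩, pd_edeg n j⟩
    · show -(mono n {cidx n j} Finset.univ) = 0
      have : (Finset.univ : Finset (Fin n)) ≠ {cidx n j} := by
        intro h
        have := congrArg Finset.card h
        simp at this; omega
      simp [mono, this]
    · rw [DH_eq]
      have : (fun k => pd n (cidx n k) (par n (-mono n {cidx n j})))
          = Pi.single j (mono n ∅) := by
        funext k
        rw [map_neg, par_mono]
        by_cases hk : k = j
        · subst hk; simp [pd_gen, msign]
        · have h2 : cidx n k ≠ cidx n j := fun h => hk (by rw [← cidx_cidx n k, h, cidx_cidx])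
          simp [pd_gen, hk, h2]
      rw [this, Wmap_single, mulOp_one, one_mul]

/-- Constant coefficients from vanishing partial derivatives. -/
theorem pd_zero_coef (j : Fin n) (g : Lambda n) (S : Finset (Fin n)) (hj : j ∈ S)
    (h : pd n j g (S.erase j) = 0) : g S = 0 := by
  have h' : (if j ∈ S.erase j then 0 else msign ((S.erase j).filter (· < j)).card *
    g (insert j (S.erase j))) = 0 := h
  rw [if_neg (Finset.notMem_erase j S), Finset.insert_erase hj] at h'
  rcases mul_eq_zero.1 h' with h2 | h2
  · exact absurd h2 (by simp [msign])
  · exact h2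

theorem par_one : par n (mono n ∅) = mono n ∅ := by simp [par_mono, msign]

/-- Step one: an element of `W` centralizing `L_{-1}` has constant coefficients (types W, S, H). -/
theorem const_of_pd (D : E n) (hD : D ∈ Wn n) (h : ∀ j, sbL n (pd n j) D = 0)
    (i : Fin n) (S : Finset (Fin n)) (hS : S ≠ ∅) : D (mono n {i}) S = 0 := by
  obtain ⟨F, rfl⟩ := hD
  obtain ⟨j, hj⟩ := Finset.nonempty_iff_ne_empty.2 hS
  apply pd_zero_coef n j _ S hj
  have h1 := h j
  rw [sb_odd n _ _ (pd_par_odd n j)] at h1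
  have h2 := congrFun (LinearMap.congr_fun h1 (mono n {i})) (S.erase j)
  have h3 : (par n * Wmap n F * par n * pd n j) (mono n {i}) = 0 := by
    simp only [Module.End.mul_apply, pd_gen]
    split_ifs
    · rw [par_one, Wmap_one, map_zero]
    · simp
  rw [LinearMap.sub_apply, h3, sub_zero] at h2
  exact h2

theorem oneM_pd_odd (hn : Even n) (j : Fin n) :
    par n * (mulOp n (oneM n) * pd n j) * par n = -(mulOp n (oneM n) * pd n j) := by
  rw [mul_pd_par]
  have : par n (oneM n) = oneM n := by
    rw [oneM, map_sub, par_one, omegaTop, par_mono]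
    simp [msign, hn.neg_one_pow]
  rw [this]

theorem par_apply (g : Lambda n) (S : Finset (Fin n)) : par n g S = msign S.card * g S := rfl

/-- Step one for type St. -/
theorem const_of_oneM_pd (hn : 2 ≤ n) (he : Even n) (D : E n) (hD : D ∈ Wn n)
    (h : ∀ j, sbL n (mulOp n (oneM n) * pd n j) D = 0)
    (i : Fin n) (S : Finset (Fin n)) (hS : S ≠ ∅) : D (mono n {i}) S = 0 := by
  obtain ⟨F, rfl⟩ := hD
  have hm : ∀ g : Lambda n, ∀ U, U ≠ Finset.univ → mulOp n (oneM n) g U = g U := by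
    intro g U hU
    have : mulOp n (oneM n) g = g - mulOp n (omegaTop n) g := by
      rw [oneM, map_sub, mulOp_one]; rfl
    rw [this, Pi.sub_apply, mulOp_omega, if_neg hU, sub_zero]
  have key : ∀ j U, U ≠ Finset.univ → (i = j → U = ∅) →
      pd n j (Wmap n F (mono n {i})) U = 0 := by
    intro j U hU hij
    have h1 := h j
    rw [sb_odd n _ _ (oneM_pd_odd n he j)] at h1
    have h2 := congrFun (LinearMap.congr_fun h1 (mono n {i})) U
    have h3 : (par n * Wmap n F * par n * (mulOp n (oneM n) * pd n j)) (mono n {i}) U = 0 := by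
      simp only [Module.End.mul_apply, pd_gen]
      split_ifs with hji
      · rw [mulOp_one_right, hij hji.symm, par_apply]
        have : par n (oneM n) = oneM n := by
          rw [oneM, map_sub, par_one, omegaTop, par_mono]
          simp [msign, he.neg_one_pow]
        rw [this, oneM, map_sub, Wmap_one, Pi.sub_apply, Wmap_omega n hn]
        simp
      · simp
    rw [LinearMap.sub_apply, Pi.sub_apply, h3, sub_zero] at h2
    exact (hm _ U hU).symm.trans h2
  have hU : ∀ j ∈ S, S.erase j ≠ Finset.univ := fun j _ h => by
    have := Finset.mem_univ j
    rw [← h] at this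
    exact Finset.notMem_erase j S this
  by_cases hSi : S = {i}
  · subst hSi
    refine pd_zero_coef n i _ _ (Finset.mem_singleton_self i) (key i _ (hU i (by simp)) ?_)
    intro _; simp
  · obtain ⟨j, hj, hji⟩ : ∃ j ∈ S, j ≠ i := by
      by_contra hcon
      push Not at hcon
      exact hSi (Finset.eq_singleton_iff_nonempty_unique_mem.2
        ⟨Finset.nonempty_iff_ne_empty.2 hS, hcon⟩)
    exact pd_zero_coef n j _ _ hj (key j _ (hU j hj) fun h => absurd h.symm hji)

theorem DH2_even (i j : Fin n) (hij : i ≠ j) :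
    par n * DHmap n (mono n {i, j}) * par n = DHmap n (mono n {i, j}) := by
  have hp : par n (mono n {i, j}) = mono n {i, j} := by
    rw [par_mono, Finset.card_pair hij]; simp [msign]
  have hk : ∀ k, par n (pd n k (mono n {i, j})) = - pd n k (mono n {i, j}) := by
    intro k
    have := LinearMap.congr_fun (par_pd n k) (mono n {i, j})
    simp only [Module.End.mul_apply, LinearMap.neg_apply, hp] at this
    exact this
  show par n * (∑ k, mulOp n (pd n k (par n (mono n {i, j}))) * pd n (cidx n k)) * par n
    = ∑ k, mulOp n (pd n k (par n (mono n {i, j}))) * pd n (cidx n k)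
  rw [Finset.mul_sum, Finset.sum_mul]
  refine Finset.sum_congr rfl fun k _ => ?_
  rw [mul_pd_par, hp, hk, map_neg, Eneg_mul, neg_neg]

theorem DH2_grade (hn : 4 < n) (i j : Fin n) (hij : i ≠ j) :
    DHmap n (mono n {i, j}) ∈ CT.grade .H n 0 := by
  have hp : par n (mono n {i, j}) = mono n {i, j} := by
    rw [par_mono, Finset.card_pair hij]; simp [msign]
  refine ⟨⟨_, ?_, rfl⟩, ?_⟩
  · show mono n {i, j} Finset.univ = 0
    have : (Finset.univ : Finset (Fin n)) ≠ {i, j} := by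
      intro h
      have := congrArg Finset.card h
      rw [Finset.card_pair hij] at this
      simp at this; omega
    simp [mono, this]
  · show (∑ k, mulOp n (pd n k (par n (mono n {i, j}))) * pd n (cidx n k)) ∈ edeg n 0
    refine Submodule.sum_mem _ fun k _ => ?_
    rw [hp]
    have h2 : mono n {i, j} ∈ ldeg n 2 := by
      have := mono_ldeg n {i, j}
      rw [Finset.card_pair hij] at this
      exact_mod_cast this
    have := mul_edeg n _ _ _ _ (mulOp_edeg n _ _ (pd_edeg n k 2 _ h2)) (pd_edeg n (cidx n k))
    norm_num at this
    exact this

theorem DH2_act (i j : Fin n) (hij : i ≠ j) :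
    ∃ c : ℂ, c ≠ 0 ∧ DHmap n (mono n {i, j}) (mono n {cidx n i}) = c • mono n {j} := by
  have hp : par n (mono n {i, j}) = mono n {i, j} := by
    rw [par_mono, Finset.card_pair hij]; simp [msign]
  refine ⟨msign (({j} : Finset (Fin n)).filter (· < i)).card, ?_, ?_⟩
  · simp [msign]
  · rw [DH_eq, Wmap_gen, cidx_cidx, hp, pd_pair n i j hij]

/-- Step two. -/
theorem zero_of_const (D : E n) (hD : D ∈ Wn n)
    (h1 : ∀ i, ∀ S, S ≠ ∅ → D (mono n {i}) S = 0)
    (h2 : ∀ j, ∃ x ∈ Wn n, par n * x * par n = x ∧ sbL n x D = 0 ∧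
      ∃ k, ∃ c : ℂ, c ≠ 0 ∧ x (mono n {k}) = c • mono n {j}) : D = 0 := by
  have hc : ∀ i, D (mono n {i}) = D (mono n {i}) ∅ • mono n ∅ := by
    intro i; funext S
    by_cases hS : S = ∅
    · subst hS; simp [mono]
    · simp [h1 i S hS, mono, hS]
  have hz : ∀ j, D (mono n {j}) = 0 := by
    intro j
    obtain ⟨x, ⟨G, rfl⟩, hx, hb, k, c, hc0, hk⟩ := h2 j
    rw [sb_even n _ _ hx] at hb
    have h3 := LinearMap.congr_fun hb (mono n {k})
    rw [LinearMap.sub_apply, Module.End.mul_apply, Module.End.mul_apply, hk, hc k, map_smul,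
      Wmap_one, smul_zero, zero_sub, LinearMap.zero_apply, neg_eq_zero, map_smul] at h3
    exact (smul_eq_zero.1 h3).resolve_left hc0
  obtain ⟨F, rfl⟩ := hD
  have : F = 0 := by
    funext i
    rw [← Wmap_gen n F i, hz i]; rfl
  rw [this, map_zero]

theorem xd_even (i j : Fin n) :
    par n * (mulOp n (mono n {i}) * pd n j) * par n = mulOp n (mono n {i}) * pd n j := by
  rw [mul_pd_par, par_mono]
  simp [msign, Eneg_mul]

theorem exists_other (hn : 2 ≤ n) (j : Fin n) : ∃ i, i ≠ j := by
  have : Nontrivial (Fin n) := Fin.nontrivial_iff_two_le.2 hn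
  exact exists_ne j

/-- The centralizer in `L'` of the local part is zero. -/
theorem centralizer_zero (t : CT) (ht : t.valid n) (D : E n) (hD : D ∈ t.prime n)
    (h : ∀ x ∈ t.grade n (-1) ⊔ t.grade n 0 ⊔ t.grade n 1,
      (par n * x * par n = x ∨ par n * x * par n = -x) → sbL n x D = 0) : D = 0 := by
  have hW := prime_le n t hD
  have hn : 2 ≤ n := by
    cases t
    · have : 4 ≤ n := ht
      omega
    · have : 4 ≤ n := ht
      omega
    · have : 4 ≤ n ∧ Even n := ht
      omega
    · have : 4 < n := ht
      omega
  have hm1 : ∀ x ∈ t.grade n (-1), x ∈ t.grade n (-1) ⊔ t.grade n 0 ⊔ t.grade n 1 :=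
    fun x hx => (le_sup_left.trans le_sup_left : t.grade n (-1) ≤ _) hx
  have hm0 : ∀ x ∈ t.grade n 0, x ∈ t.grade n (-1) ⊔ t.grade n 0 ⊔ t.grade n 1 :=
    fun x hx => (le_sup_right.trans le_sup_left : t.grade n 0 ≤ _) hx
  refine zero_of_const n D hW ?_ ?_
  · intro i S hS
    by_cases htS : t = .St
    · subst htS
      have hv : 4 ≤ n ∧ Even n := ht
      refine const_of_oneM_pd n hn hv.2 D hW (fun j => ?_) i S hS
      refine h _ (hm1 _ ?_) (Or.inr (oneM_pd_odd n hv.2 j))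
      show _ ∈ (if (-1:ℤ) = -1 then _ else Stn n ⊓ edeg n (-1))
      rw [if_pos rfl]
      exact Submodule.subset_span ⟨j, rfl⟩
    · exact const_of_pd n D hW (fun j => h _ (hm1 _ (pd_grade n t htS hn j))
        (Or.inr (pd_par_odd n j))) i S hS
  · intro j
    obtain ⟨i, hij⟩ := exists_other n hn j
    by_cases htH : t = .H
    · subst htH
      exact ⟨_, DH_mem_W n _, DH2_even n i j hij,
        h _ (hm0 _ (DH2_grade n ht i j hij)) (Or.inl (DH2_even n i j hij)),
        cidx n i, DH2_act n i j hij⟩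
    · refine ⟨_, ⟨_, Wmap_single n i (mono n {j})⟩, xd_even n j i,
        h _ (hm0 _ (xd_grade n t htH j i hij.symm)) (Or.inl (xd_even n j i)), i, 1, one_ne_zero, ?_⟩
      rw [Module.End.mul_apply, pd_gen, if_pos rfl, mulOp_one_right, one_smul]

theorem grade_le (t : CT) (j : ℤ) : t.grade n j ≤ t.algebra n := by
  cases t with
  | W => exact inf_le_left
  | S => exact inf_le_left
  | H => exact inf_le_left
  | St =>
    show (if j = -1 then Submodule.span ℂ (Set.range fun i : Fin n => mulOp n (oneM n) * pd n i)
      else Stn n ⊓ edeg n j) ≤ Stn n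
    split_ifs
    · rw [Submodule.span_le]
      rintro _ ⟨i, rfl⟩
      refine ⟨_, div_single n i _ (pd_one n i), ?_⟩
      rw [LinearMap.comp_apply, scale_single, mulOp_one_right, Wmap_single]
    · exact inf_le_left

/-- Let `f` be a homogeneous super-biderivation of a Cartan type Lie
superalgebra `L` with representing maps `φ_f, ψ_f : L → L'`
(`f(x,y) = [φ_f(x), y] = [x, ψ_f(y)]`). If `φ_f` or `ψ_f` vanishes on
`L_{−1} ⊕ L_0 ⊕ L_1`, then `f` is the zero map. -/
theorem superBider_vanish_local (n : ℕ) (t : CT) (ht : t.valid n)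
    (pf : ZMod 2) (f : E n →ₗ[ℂ] E n →ₗ[ℂ] E n)
    (hf : IsSuperBider n (t.algebra n) pf f)
    (phi psi : E n →ₗ[ℂ] E n)
    (hmaps : ∀ x ∈ t.algebra n, phi x ∈ t.prime n ∧ psi x ∈ t.prime n)
    (hrepr : ∀ x ∈ t.algebra n, ∀ y ∈ t.algebra n,
      f x y = sbL n (phi x) y ∧ f x y = sbL n x (psi y))
    (hvan : (∀ x ∈ t.grade n (-1) ⊔ t.grade n 0 ⊔ t.grade n 1, phi x = 0) ∨
            (∀ x ∈ t.grade n (-1) ⊔ t.grade n 0 ⊔ t.grade n 1, psi x = 0)) :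
    ∀ x ∈ t.algebra n, ∀ y ∈ t.algebra n, f x y = 0 := by
  have hloc : t.grade n (-1) ⊔ t.grade n 0 ⊔ t.grade n 1 ≤ t.algebra n :=
    sup_le (sup_le (grade_le n t _) (grade_le n t _)) (grade_le n t _)
  intro x hx y hy
  rcases hvan with hv | hv
  · have : psi y = 0 := by
      refine centralizer_zero n t ht _ (hmaps y hy).2 fun z hz _ => ?_
      have h := hrepr z (hloc hz) y hy
      rw [← h.2, h.1, hv z hz, map_zero, LinearMap.zero_apply]
    rw [(hrepr x hx y hy).2, this, map_zero]
  · have : phi x = 0 := by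
      refine centralizer_zero n t ht _ (hmaps x hx).1 fun z hz hpar => ?_
      have h := hrepr x hx z (hloc hz)
      have h0 : sbL n (phi x) z = 0 := by rw [← h.1, h.2, hv z hz, map_zero]
      rcases hpar with hp | hp
      · exact flip_even n z _ hp h0
      · exact flip_odd n z _ hp h0
    rw [(hrepr x hx y hy).1, this, map_zero, LinearMap.zero_apply]

end CartanSuper
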